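/- Let 0 < r < R, 0 < r_* < R_*, and let λ : [r,R] → ℝ be continuous, positive and nondecreasing. Let r₀ ∈ (r,R), suppose Φ : [r₀,R] → ℝ is a C¹ function satisfying s·λ(s)·Φ'(s) = λ(s)² − Φ(s)² with Φ(r₀) = 0 and Φ(s) ≥ 0 on [r₀,R], and H : [r₀,R] → ℝ is a C¹ function satisfying s·λ(s)·H'(s) = H(s)·Φ(s) with H(r₀) = r_* and H(R) = R_*. Then for every orientation-preserving C¹ diffeomorphism h from the annulus A(r,R) onto A(r_*,R_*) that extends continuously to the closed annuli with |h(z)| = r_* when |z| = r and |h(z)| = R_* when |z| = R, one has ∫_{A(r,R)} λ(|z|)·‖Dh(z)‖² dz ≥ 2π·R_*²·Φ(R) + 2π·r_*²·∫_r^{r₀} λ(s)/s ds. -/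

import Mathlib

/-!
For `s ∈ (r,R)` let `a(s) = ½ ∫ Im (conj h · h_θ) dθ` be the signed area enclosed by the image of
the circle `|z| = s` (`areaFn`). Four facts about `a` carry the argument.

* `a'(s) = ∫ s · J_h dθ` (`hasDerivAt_areaFn`). As `h` is only `C¹`, differentiation under the
  integral is replaced by the integration by parts
  `∫ v ∧ v' - ∫ u ∧ u' = ∫ (v - u) ∧ (v' + u')` for closed curves `u`, `v`.
* `∫ |h_θ|² dθ ≥ 2 a(s)` (`two_areaFn_le`): the isoperimetric inequality, from Wirtinger's
  inequality.
* `a(s) → π R_*²` as `s → R` (`tendsto_areaFn`). Let `T` vanish near the inner boundary circle of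
  the target and be the identity near the outer one. Then `T ∘ h` encloses area `0` on circles near
  `|z| = r` and `a(s)` on circles near `|z| = R`, so the limit of `a` is `∫ J_{T ∘ h}`, which is
  `∫ J_T` over the target by change of variables. This number does not depend on `h`, and for the
  identity map it is `π R_*²`.
* `a(s) ≥ π r_*²` (`le_areaFn`), because `∫ J_h` over `{s < |z| < R}` is the area of a subset of
  `A(r_*,R_*)`.

Since `λ` is nondecreasing, `0 ≤ Φ ≤ λ` (`riccati_le`), so `Φ' ≥ 0`. By the Riccati equation and
completing the square, `s λ ‖Dh‖² ≥ 2 Φ s J_h + Φ' |h_θ|²` (`pointwise_bound`). Integrated over a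
circle of radius `s ≥ r₀`, the right side is at least `2 Φ a' + 2 Φ' a = (2 Φ a)'`, and over a circle
of radius `s ≤ r₀` the energy is at least `(λ/s) ∫ |h_θ|² ≥ (λ/s) 2π r_*²`. Integrating in `s` over
compact subintervals and passing to the limit gives the bound, with `Φ(r₀) = 0` removing the
boundary term at `r₀`.
-/

open Set MeasureTheory

open Filter Topology

/-! ### The wedge product, Wirtinger's inequality and the isoperimetric inequality -/

/-- The real bilinear form `Im (conj p * q)`, i.e. the signed area of the parallelogram
spanned by `p` and `q`. -/
noncomputable def wedge (p q : ℂ) : ℝ := p.re * q.im - p.im * q.re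

lemma wedge_continuousOn {X : Type*} [TopologicalSpace X] {f g : X → ℂ} {s : Set X}
    (hf : ContinuousOn f s) (hg : ContinuousOn g s) :
    ContinuousOn (fun x => wedge (f x) (g x)) s := by
  unfold wedge
  have h1 := Complex.continuous_re.comp_continuousOn hf
  have h2 := Complex.continuous_im.comp_continuousOn hf
  have h3 := Complex.continuous_re.comp_continuousOn hg
  have h4 := Complex.continuous_im.comp_continuousOn hg
  exact (h1.mul h4).sub (h2.mul h3)

@[fun_prop]
lemma wedge_continuous {X : Type*} [TopologicalSpace X] {f g : X → ℂ}
    (hf : Continuous f) (hg : Continuous g) :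
    Continuous (fun x => wedge (f x) (g x)) := by
  unfold wedge
  fun_prop

lemma wedge_abs_le (p q : ℂ) : |wedge p q| ≤ 2 * ‖p‖ * ‖q‖ := by
  unfold wedge
  have h1 := Complex.abs_re_le_norm p
  have h2 := Complex.abs_im_le_norm p
  have h3 := Complex.abs_re_le_norm q
  have h4 := Complex.abs_im_le_norm q
  calc |p.re * q.im - p.im * q.re| ≤ |p.re * q.im| + |p.im * q.re| := abs_sub _ _
    _ = |p.re| * |q.im| + |p.im| * |q.re| := by rw [abs_mul, abs_mul]
    _ ≤ ‖p‖ * ‖q‖ + ‖p‖ * ‖q‖ := by gcongr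
    _ = _ := by ring

lemma two_wedge_le (p q : ℂ) : 2 * wedge p q ≤ ‖p‖ ^ 2 + ‖q‖ ^ 2 := by
  rw [← Complex.normSq_eq_norm_sq, ← Complex.normSq_eq_norm_sq, Complex.normSq_apply,
    Complex.normSq_apply]
  unfold wedge
  nlinarith [sq_nonneg (p.re - q.im), sq_nonneg (p.im + q.re)]

/-- Wirtinger's inequality for mean-zero closed curves. -/
lemma wirtinger {g g' : ℝ → ℂ} (hg : ∀ x, HasDerivAt g (g' x) x) (hg' : Continuous g')
    (hper : g Real.pi = g (-Real.pi)) (hmean : ∫ x in (-Real.pi)..Real.pi, g x = 0) :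
    ∫ x in (-Real.pi)..Real.pi, ‖g x‖ ^ 2 ≤ ∫ x in (-Real.pi)..Real.pi, ‖g' x‖ ^ 2 := by
  have hpi := Real.pi_pos
  have hab : -Real.pi < Real.pi := by linarith
  have hgc : Continuous g := continuous_iff_continuousAt.2 fun x => (hg x).continuousAt
  have mem : ∀ f : ℝ → ℂ, Continuous f →
      MemLp f 2 (volume.restrict (Ioc (-Real.pi) Real.pi)) := by
    intro f hf
    rw [memLp_two_iff_integrable_sq_norm hf.aestronglyMeasurable]
    exact ((hf.norm.pow 2).integrableOn_Icc).mono_set Ioc_subset_Icc_self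
  have h1 := hasSum_sq_fourierCoeffOn hab (mem g hgc)
  have h2 := hasSum_sq_fourierCoeffOn hab (mem g' hg')
  have h3 := hasSum_le (fun n => ?_) h1 h2
  · simp only [smul_eq_mul] at h3
    exact le_of_mul_le_mul_left h3 (by apply inv_pos.2; linarith)
  · by_cases hn : n = 0
    · subst hn
      rw [fourierCoeffOn_eq_integral]
      simp [hmean]
    · have := fourierCoeffOn_of_hasDerivAt hab hn (fun x _ => hg x)
        (hg'.intervalIntegrable (-Real.pi) Real.pi)
      rw [this, hper, sub_self, mul_zero, zero_sub]
      have hn1 : (1 : ℝ) ≤ |(n : ℝ)| := by exact_mod_cast Int.one_le_abs hn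
      have e : ‖(1 : ℂ) / (-2 * Real.pi * Complex.I * n) *
          (-((((Real.pi : ℝ) : ℂ) - ((-Real.pi : ℝ) : ℂ)) * fourierCoeffOn hab g' n))‖
          = |(n : ℝ)|⁻¹ * ‖fourierCoeffOn hab g' n‖ := by
        have : (((Real.pi : ℝ) : ℂ) - ((-Real.pi : ℝ) : ℂ)) = 2 * Real.pi := by
          push_cast; ring
        rw [this]
        simp only [norm_mul, norm_div, norm_neg, norm_one, Complex.norm_I, Complex.norm_real,
          Complex.norm_ofNat, Complex.norm_intCast, Real.norm_eq_abs, abs_of_pos hpi]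
        field_simp
      rw [e]
      have : |(n : ℝ)|⁻¹ * ‖fourierCoeffOn hab g' n‖ ≤ 1 * ‖fourierCoeffOn hab g' n‖ := by
        gcongr
        exact inv_le_one_of_one_le₀ hn1
      rw [one_mul] at this
      gcongr

/-- The isoperimetric inequality in energy form: the energy of a closed curve is at least
twice its enclosed signed area `½ ∫ g ∧ g'`. It follows from Wirtinger's inequality after
translating the mean of the curve to the origin, which changes neither side. -/
lemma isoperimetric {g g' : ℝ → ℂ} (hg : ∀ x, HasDerivAt g (g' x) x) (hg' : Continuous g')
    (hper : g Real.pi = g (-Real.pi)) :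
    ∫ x in (-Real.pi)..Real.pi, wedge (g x) (g' x) ≤ ∫ x in (-Real.pi)..Real.pi, ‖g' x‖ ^ 2 := by
  have hpi := Real.pi_pos
  have hgc : Continuous g := continuous_iff_continuousAt.2 fun x => (hg x).continuousAt
  set c : ℂ := (2 * Real.pi : ℂ)⁻¹ * ∫ x in (-Real.pi)..Real.pi, g x with hc
  have hW := wirtinger (g := fun x => g x - c) (g' := g') (fun x => (hg x).sub_const c) hg'
    (by simp [hper]) (by
      rw [intervalIntegral.integral_sub (hgc.intervalIntegrable _ _) (by simp)]
      rw [intervalIntegral.integral_const, hc]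
      have : (Real.pi : ℂ) ≠ 0 := by exact_mod_cast hpi.ne'
      simp only [Complex.real_smul]
      push_cast
      field_simp
      ring)
  have hint : ∫ x in (-Real.pi)..Real.pi, g' x = 0 := by
    rw [intervalIntegral.integral_eq_sub_of_hasDerivAt (fun x _ => hg x)
      (hg'.intervalIntegrable _ _), hper, sub_self]
  have hre : ∫ x in (-Real.pi)..Real.pi, (g' x).re = 0 := by
    have := Complex.reCLM.intervalIntegral_comp_comm (hg'.intervalIntegrable (μ := volume) (-Real.pi) Real.pi)
    simpa [hint] using this
  have him : ∫ x in (-Real.pi)..Real.pi, (g' x).im = 0 := by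
    have := Complex.imCLM.intervalIntegral_comp_comm (hg'.intervalIntegrable (μ := volume) (-Real.pi) Real.pi)
    simpa [hint] using this
  have hwc : ∫ x in (-Real.pi)..Real.pi, wedge (g x) (g' x)
      = ∫ x in (-Real.pi)..Real.pi, wedge (g x - c) (g' x) := by
    have e : ∀ x, wedge (g x) (g' x) = wedge (g x - c) (g' x) +
        (c.re * (g' x).im - c.im * (g' x).re) := by
      intro x; simp only [wedge, Complex.sub_re, Complex.sub_im]; ring
    simp_rw [e]
    have c1 : Continuous fun x => wedge (g x - c) (g' x) := by fun_prop
    have c2 : Continuous fun x => c.re * (g' x).im - c.im * (g' x).re := by fun_prop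
    rw [intervalIntegral.integral_add (c1.intervalIntegrable _ _) (c2.intervalIntegrable _ _),
      intervalIntegral.integral_sub (Continuous.intervalIntegrable (by fun_prop) _ _)
      (Continuous.intervalIntegrable (by fun_prop) _ _),
      intervalIntegral.integral_const_mul, intervalIntegral.integral_const_mul, hre, him]
    simp
  rw [hwc]
  have key : ∫ x in (-Real.pi)..Real.pi, 2 * wedge (g x - c) (g' x) ≤
      ∫ x in (-Real.pi)..Real.pi, (‖g x - c‖ ^ 2 + ‖g' x‖ ^ 2) := by
    apply intervalIntegral.integral_mono_on (by linarith)
    · exact (continuous_const.mul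
        (wedge_continuous (hgc.sub continuous_const) hg')).intervalIntegrable _ _
    · exact Continuous.intervalIntegrable (by fun_prop) _ _
    · intro x _; exact two_wedge_le _ _
  rw [intervalIntegral.integral_const_mul, intervalIntegral.integral_add
    (Continuous.intervalIntegrable (by fun_prop) _ _)
    (Continuous.intervalIntegrable (by fun_prop) _ _)] at key
  linarith

/-! ### Area enclosed by a family of closed curves -/

/-- Integration by parts for closed curves: `∫ u ∧ dv = ∫ v ∧ du`. -/
lemma wedge_integral_antisymm {u u' v v' : ℝ → ℂ} (hu : ∀ x, HasDerivAt u (u' x) x)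
    (hv : ∀ x, HasDerivAt v (v' x) x) (hu' : Continuous u') (hv' : Continuous v')
    (hup : u Real.pi = u (-Real.pi)) (hvp : v Real.pi = v (-Real.pi)) :
    ∫ x in (-Real.pi)..Real.pi, (wedge (u x) (v' x) - wedge (v x) (u' x)) = 0 := by
  have hre : ∀ {w w' : ℝ → ℂ}, (∀ x, HasDerivAt w (w' x) x) →
      ∀ x, HasDerivAt (fun y => (w y).re) (w' x).re x := fun h x =>
    Complex.reCLM.hasFDerivAt.comp_hasDerivAt x (h x)
  have him : ∀ {w w' : ℝ → ℂ}, (∀ x, HasDerivAt w (w' x) x) →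
      ∀ x, HasDerivAt (fun y => (w y).im) (w' x).im x := fun h x =>
    Complex.imCLM.hasFDerivAt.comp_hasDerivAt x (h x)
  have huc : Continuous u := continuous_iff_continuousAt.2 fun x => (hu x).continuousAt
  have hvc : Continuous v := continuous_iff_continuousAt.2 fun x => (hv x).continuousAt
  have hd : ∀ x, HasDerivAt (fun y => wedge (u y) (v y))
      (wedge (u x) (v' x) - wedge (v x) (u' x)) x := by
    intro x
    have := ((hre hu x).mul (him hv x)).sub ((him hu x).mul (hre hv x))
    refine this.congr_deriv ?_
    simp only [wedge]; ring
  rw [intervalIntegral.integral_eq_sub_of_hasDerivAt (fun x _ => hd x), hup, hvp, sub_self]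
  exact ((wedge_continuous huc hv').sub (wedge_continuous hvc hu')).intervalIntegrable _ _

/-- Derivative of the enclosed area along a `C¹` family of closed curves. The mixed second
derivative is avoided: integrating by parts, the difference of the areas enclosed by `u` and
`v` is `½ ∫ (v - u) ∧ (v' + u')`. -/
lemma hasDerivAt_area {r R : ℝ} {u us ut : ℝ → ℝ → ℂ}
    (hus : ∀ s ∈ Ioo r R, ∀ θ, HasDerivAt (fun σ => u σ θ) (us s θ) s)
    (hut : ∀ s ∈ Ioo r R, ∀ θ, HasDerivAt (u s) (ut s θ) θ)
    (husc : ContinuousOn (fun p : ℝ × ℝ => us p.1 p.2) (Ioo r R ×ˢ univ))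
    (hutc : ContinuousOn (fun p : ℝ × ℝ => ut p.1 p.2) (Ioo r R ×ˢ univ))
    (hper : ∀ s ∈ Ioo r R, u s Real.pi = u s (-Real.pi)) {s : ℝ} (hs : s ∈ Ioo r R) :
    HasDerivAt (fun σ => (1 / 2) * ∫ θ in (-Real.pi)..Real.pi, wedge (u σ θ) (ut σ θ))
      (∫ θ in (-Real.pi)..Real.pi, wedge (us s θ) (ut s θ)) s := by
  have hutθ : ∀ σ ∈ Ioo r R, Continuous (ut σ) := by
    intro σ hσ
    have : ContinuousOn (fun θ : ℝ => ut σ θ) univ :=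
      hutc.comp (f := fun θ : ℝ => (σ, θ)) (by fun_prop) (fun θ _ => ⟨hσ, mem_univ _⟩)
    exact continuousOn_univ.1 this
  have huθ : ∀ σ ∈ Ioo r R, Continuous (u σ) := fun σ hσ =>
    continuous_iff_continuousAt.2 fun x => (hut σ hσ x).continuousAt
  obtain ⟨η, hη, hηs⟩ : ∃ η > 0, Metric.closedBall s η ⊆ Ioo r R :=
    Metric.nhds_basis_closedBall.mem_iff.1 (isOpen_Ioo.mem_nhds hs)
  have hK : IsCompact (Metric.closedBall s η ×ˢ Icc (-Real.pi) Real.pi) :=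
    (isCompact_closedBall s η).prod isCompact_Icc
  have hKs : Metric.closedBall s η ×ˢ Icc (-Real.pi) Real.pi ⊆ Ioo r R ×ˢ univ :=
    prod_mono hηs (subset_univ _)
  obtain ⟨M1, hM1⟩ := hK.exists_bound_of_continuousOn (husc.mono hKs)
  obtain ⟨M2, hM2⟩ := hK.exists_bound_of_continuousOn (hutc.mono hKs)
  have hball : Metric.closedBall s η ∈ 𝓝 s := Metric.closedBall_mem_nhds s hη
  have hpi := Real.pi_pos
  rw [hasDerivAt_iff_tendsto_slope]
  have hslope : ∀ σ ∈ Metric.closedBall s η, σ ≠ s →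
      ∫ θ in (-Real.pi)..Real.pi,
        (1 / 2) * wedge ((σ - s)⁻¹ • (u σ θ - u s θ)) (ut σ θ + ut s θ) =
      slope (fun σ => (1 / 2) * ∫ θ in (-Real.pi)..Real.pi, wedge (u σ θ) (ut σ θ)) s σ := by
    intro σ hσ hne
    have hσ' := hηs hσ
    have h0 := wedge_integral_antisymm (hut s hs) (hut σ hσ') (hutθ s hs) (hutθ σ hσ')
      (hper s hs) (hper σ hσ')
    have e : ∀ θ, (1 / 2) * wedge ((σ - s)⁻¹ • (u σ θ - u s θ)) (ut σ θ + ut s θ) =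
        (σ - s)⁻¹ * (1 / 2) * ((wedge (u σ θ) (ut σ θ) - wedge (u s θ) (ut s θ)) -
          (wedge (u s θ) (ut σ θ) - wedge (u σ θ) (ut s θ))) := by
      intro θ
      simp only [wedge, Complex.smul_re, Complex.smul_im, Complex.sub_re, Complex.sub_im,
        Complex.add_re, Complex.add_im, smul_eq_mul]
      ring
    have c1 := wedge_continuous (huθ σ hσ') (hutθ σ hσ')
    have c2 := wedge_continuous (huθ s hs) (hutθ s hs)
    have c3 := wedge_continuous (huθ s hs) (hutθ σ hσ')
    have c4 := wedge_continuous (huθ σ hσ') (hutθ s hs)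
    have c5 : Continuous fun θ => wedge (u σ θ) (ut σ θ) - wedge (u s θ) (ut s θ) := by fun_prop
    have c6 : Continuous fun θ => wedge (u s θ) (ut σ θ) - wedge (u σ θ) (ut s θ) := by fun_prop
    simp_rw [e]
    rw [intervalIntegral.integral_const_mul, intervalIntegral.integral_sub
      (c5.intervalIntegrable _ _) (c6.intervalIntegrable _ _), h0,
      intervalIntegral.integral_sub (c1.intervalIntegrable _ _) (c2.intervalIntegrable _ _),
      slope_def_field]
    ring
  have hev : ∀ᶠ σ in 𝓝[≠] s, σ ∈ Metric.closedBall s η ∧ σ ≠ s :=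
    (Filter.Eventually.and (mem_nhdsWithin_of_mem_nhds hball) self_mem_nhdsWithin)
  refine Tendsto.congr' (hev.mono fun σ hσ => hslope σ hσ.1 hσ.2) ?_
  apply intervalIntegral.tendsto_integral_filter_of_dominated_convergence
    (fun _ => 2 * M1 * (M2 + M2))
  · refine hev.mono fun σ hσ => Continuous.aestronglyMeasurable ?_
    have c1 := huθ σ (hηs hσ.1)
    have c2 := huθ s hs
    have c3 := hutθ σ (hηs hσ.1)
    have c4 := hutθ s hs
    fun_prop
  · refine hev.mono fun σ hσ => Eventually.of_forall fun θ hθ => ?_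
    rw [uIoc_of_le (by linarith)] at hθ
    have hθ' := Ioc_subset_Icc_self hθ
    have b1 : ‖(σ - s)⁻¹ • (u σ θ - u s θ)‖ ≤ M1 := by
      have := (convex_closedBall s η).norm_image_sub_le_of_norm_hasDerivWithin_le
        (f := fun σ => u σ θ) (f' := fun σ => us σ θ) (C := M1)
        (fun x hx => (hus x (hηs hx) θ).hasDerivWithinAt)
        (fun x hx => hM1 (x, θ) ⟨hx, hθ'⟩) (Metric.mem_closedBall_self hη.le) hσ.1
      rw [norm_smul, norm_inv]
      have hpos : 0 < ‖σ - s‖ := norm_pos_iff.2 (sub_ne_zero.2 hσ.2)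
      rw [inv_mul_le_iff₀ hpos, mul_comm]
      exact this
    have b2 : ‖ut σ θ + ut s θ‖ ≤ M2 + M2 := (norm_add_le _ _).trans
      (add_le_add (hM2 (σ, θ) ⟨hσ.1, hθ'⟩)
        (hM2 (s, θ) ⟨Metric.mem_closedBall_self hη.le, hθ'⟩))
    have b3 := wedge_abs_le ((σ - s)⁻¹ • (u σ θ - u s θ)) (ut σ θ + ut s θ)
    have hM1' : 0 ≤ M1 := (norm_nonneg _).trans b1
    have b4 : 2 * ‖(σ - s)⁻¹ • (u σ θ - u s θ)‖ * ‖ut σ θ + ut s θ‖ ≤ 2 * M1 * (M2 + M2) := by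
      gcongr
    rw [Real.norm_eq_abs, abs_mul]
    have : |(1 / 2 : ℝ)| = 1 / 2 := by norm_num
    rw [this]
    have := abs_nonneg (wedge ((σ - s)⁻¹ • (u σ θ - u s θ)) (ut σ θ + ut s θ))
    linarith
  · simp
  · refine Eventually.of_forall fun θ _ => ?_
    have t1 : Tendsto (fun σ => (σ - s)⁻¹ • (u σ θ - u s θ)) (𝓝[≠] s) (𝓝 (us s θ)) := by
      have := hasDerivAt_iff_tendsto_slope.1 (hus s hs θ)
      exact this
    have t2 : Tendsto (fun σ => ut σ θ + ut s θ) (𝓝[≠] s) (𝓝 (ut s θ + ut s θ)) := by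
      have : ContinuousAt (fun σ => ut σ θ) s := by
        have h1 : ContinuousAt (fun p : ℝ × ℝ => ut p.1 p.2) (s, θ) :=
          hutc.continuousAt ((isOpen_Ioo.prod isOpen_univ).mem_nhds ⟨hs, mem_univ _⟩)
        exact h1.comp (f := fun σ : ℝ => (σ, θ)) (by fun_prop)
      exact (this.tendsto.mono_left nhdsWithin_le_nhds).add_const _
    have hw : Continuous (fun p : ℂ × ℂ => (1 / 2) * wedge p.1 p.2) :=
      continuous_const.mul (wedge_continuous continuous_fst continuous_snd)
    have t3 := (hw.tendsto (us s θ, ut s θ + ut s θ)).comp (t1.prodMk_nhds t2)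
    have e : wedge (us s θ) (ut s θ) = (1 / 2) * wedge (us s θ) (ut s θ + ut s θ) := by
      simp only [wedge, Complex.add_re, Complex.add_im]; ring
    rw [e]
    exact t3

/-! ### Polar coordinates and the area function -/

/-- The open circular annulus `A(r,R)` centred at the origin. -/
abbrev annulus (r R : ℝ) : Set ℂ := {z : ℂ | r < ‖z‖ ∧ ‖z‖ < R}

lemma isOpen_annulus (r R : ℝ) : IsOpen (annulus r R) :=
  (isOpen_lt continuous_const continuous_norm).inter (isOpen_lt continuous_norm continuous_const)

lemma circleMap_mem_annulus {r R s : ℝ} (hr : 0 ≤ r) (hs : s ∈ Ioo r R) (θ : ℝ) :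
    circleMap 0 s θ ∈ annulus r R := by
  have : ‖circleMap 0 s θ‖ = s := by
    rw [norm_circleMap_zero, abs_of_pos (hr.trans_lt hs.1)]
  simp only [mem_ofPred_eq, this]
  exact hs

lemma continuous_circleMap_uncurry : Continuous fun p : ℝ × ℝ => circleMap 0 p.1 p.2 := by
  unfold circleMap
  fun_prop

lemma hasDerivAt_circleMap_radius (s θ : ℝ) :
    HasDerivAt (fun σ : ℝ => circleMap 0 σ θ) (circleMap 0 1 θ) s := by
  have h1 : HasDerivAt (fun σ : ℝ => (σ : ℂ)) 1 s := Complex.ofRealCLM.hasDerivAt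
  have := (h1.mul_const (Complex.exp (θ * Complex.I))).const_add (0 : ℂ)
  simpa [circleMap] using this

/-- The Jacobian determinant of `f` at `z`. -/
noncomputable def jac (f : ℂ → ℂ) (z : ℂ) : ℝ := LinearMap.det ((fderiv ℝ f z).toLinearMap)

lemma clm_apply (D : ℂ →L[ℝ] ℂ) (z : ℂ) : D z = z.re • D 1 + z.im • D Complex.I := by
  have : z = z.re • (1 : ℂ) + z.im • Complex.I := by
    apply Complex.ext <;> simp
  conv_lhs => rw [this]
  rw [map_add, map_smul, map_smul]

lemma det_eq_wedge (D : ℂ →L[ℝ] ℂ) :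
    LinearMap.det D.toLinearMap = wedge (D 1) (D Complex.I) := by
  rw [← LinearMap.det_toMatrix Complex.basisOneI, Matrix.det_fin_two]
  simp [LinearMap.toMatrix_apply, wedge, Complex.coe_basisOneI]
  ring

lemma wedge_polar (D : ℂ →L[ℝ] ℂ) (s θ : ℝ) :
    wedge (D (circleMap 0 1 θ)) (D (circleMap 0 s θ * Complex.I)) =
      s * LinearMap.det D.toLinearMap := by
  rw [det_eq_wedge, clm_apply D (circleMap 0 1 θ), clm_apply D (circleMap 0 s θ * Complex.I)]
  simp only [wedge, circleMap_zero, Complex.exp_ofReal_mul_I_re, Complex.mul_re, Complex.mul_im,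
    Complex.exp_ofReal_mul_I_im, Complex.ofReal_re, Complex.ofReal_im, Complex.I_re, Complex.I_im,
    Complex.add_re, Complex.add_im, Complex.smul_re, Complex.smul_im, smul_eq_mul]
  linear_combination (s * ((D 1).re * (D Complex.I).im - (D 1).im * (D Complex.I).re)) *
    Real.cos_sq_add_sin_sq θ

lemma norm_sq_polar (D : ℂ →L[ℝ] ℂ) (s θ : ℝ) :
    s ^ 2 * (‖D 1‖ ^ 2 + ‖D Complex.I‖ ^ 2) =
      s ^ 2 * ‖D (circleMap 0 1 θ)‖ ^ 2 + ‖D (circleMap 0 s θ * Complex.I)‖ ^ 2 := by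
  rw [clm_apply D (circleMap 0 1 θ), clm_apply D (circleMap 0 s θ * Complex.I)]
  simp only [← Complex.normSq_eq_norm_sq, Complex.normSq_apply,
    circleMap_zero, Complex.exp_ofReal_mul_I_re, Complex.mul_re, Complex.mul_im,
    Complex.exp_ofReal_mul_I_im, Complex.ofReal_re, Complex.ofReal_im, Complex.I_re, Complex.I_im,
    Complex.add_re, Complex.add_im, Complex.smul_re, Complex.smul_im, smul_eq_mul]
  linear_combination (-s ^ 2 * ((D 1).re ^ 2 + (D Complex.I).re ^ 2 + (D 1).im ^ 2
    + (D Complex.I).im ^ 2)) * Real.cos_sq_add_sin_sq θ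

/-- The signed area `½ ∫ Im (conj f · ∂_θ f) dθ` enclosed by the image under `f` of the circle
of radius `s`. -/
noncomputable def areaFn (f : ℂ → ℂ) (s : ℝ) : ℝ :=
  (1 / 2) * ∫ θ in (-Real.pi)..Real.pi,
    wedge (f (circleMap 0 s θ)) (fderiv ℝ f (circleMap 0 s θ) (circleMap 0 s θ * Complex.I))

lemma continuousOn_fderiv_polar {r R : ℝ} (hr : 0 ≤ r) {f : ℂ → ℂ}
    (hf : ContDiffOn ℝ 1 f (annulus r R)) :
    ContinuousOn (fun p : ℝ × ℝ => fderiv ℝ f (circleMap 0 p.1 p.2)) (Ioo r R ×ˢ univ) := by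
  have h1 := hf.continuousOn_fderiv_of_isOpen (isOpen_annulus r R) le_rfl
  exact h1.comp continuous_circleMap_uncurry.continuousOn
    (fun p hp => circleMap_mem_annulus hr hp.1 p.2)

lemma hasFDerivAt_of_annulus {r R : ℝ} {f : ℂ → ℂ}
    (hf : ContDiffOn ℝ 1 f (annulus r R)) {z : ℂ} (hz : z ∈ annulus r R) :
    HasFDerivAt f (fderiv ℝ f z) z :=
  ((hf.contDiffAt ((isOpen_annulus r R).mem_nhds hz)).differentiableAt one_ne_zero).hasFDerivAt

lemma hasDerivAt_polar_angle {r R : ℝ} (hr : 0 ≤ r) {f : ℂ → ℂ}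
    (hf : ContDiffOn ℝ 1 f (annulus r R)) {s : ℝ} (hs : s ∈ Ioo r R) (θ : ℝ) :
    HasDerivAt (fun θ => f (circleMap 0 s θ))
      (fderiv ℝ f (circleMap 0 s θ) (circleMap 0 s θ * Complex.I)) θ :=
  (hasFDerivAt_of_annulus hf (circleMap_mem_annulus hr hs θ)).comp_hasDerivAt θ
    (hasDerivAt_circleMap 0 s θ)

lemma hasDerivAt_polar_radius {r R : ℝ} (hr : 0 ≤ r) {f : ℂ → ℂ}
    (hf : ContDiffOn ℝ 1 f (annulus r R)) {s : ℝ} (hs : s ∈ Ioo r R) (θ : ℝ) :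
    HasDerivAt (fun σ => f (circleMap 0 σ θ))
      (fderiv ℝ f (circleMap 0 s θ) (circleMap 0 1 θ)) s :=
  (hasFDerivAt_of_annulus hf (circleMap_mem_annulus hr hs θ)).comp_hasDerivAt s
    (hasDerivAt_circleMap_radius s θ)

lemma continuousOn_polar_angle {r R : ℝ} (hr : 0 ≤ r) {f : ℂ → ℂ}
    (hf : ContDiffOn ℝ 1 f (annulus r R)) :
    ContinuousOn (fun p : ℝ × ℝ =>
      fderiv ℝ f (circleMap 0 p.1 p.2) (circleMap 0 p.1 p.2 * Complex.I)) (Ioo r R ×ˢ univ) :=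
  (continuousOn_fderiv_polar hr hf).clm_apply
    (continuous_circleMap_uncurry.mul continuous_const).continuousOn

lemma continuousOn_polar_radius {r R : ℝ} (hr : 0 ≤ r) {f : ℂ → ℂ}
    (hf : ContDiffOn ℝ 1 f (annulus r R)) :
    ContinuousOn (fun p : ℝ × ℝ =>
      fderiv ℝ f (circleMap 0 p.1 p.2) (circleMap 0 1 p.2)) (Ioo r R ×ˢ univ) :=
  (continuousOn_fderiv_polar hr hf).clm_apply
    (continuous_circleMap_uncurry.comp (continuous_const.prodMk continuous_snd)).continuousOn

lemma circleMap_pi_eq (s : ℝ) : circleMap 0 s Real.pi = circleMap 0 s (-Real.pi) := by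
  have := periodic_circleMap 0 s (-Real.pi)
  rw [← this]; congr 1; ring

lemma hasDerivAt_areaFn {r R : ℝ} (hr : 0 ≤ r) {f : ℂ → ℂ}
    (hf : ContDiffOn ℝ 1 f (annulus r R)) {s : ℝ} (hs : s ∈ Ioo r R) :
    HasDerivAt (areaFn f)
      (∫ θ in (-Real.pi)..Real.pi, s * jac f (circleMap 0 s θ)) s := by
  have := hasDerivAt_area (r := r) (R := R) (u := fun s θ => f (circleMap 0 s θ))
    (us := fun s θ => fderiv ℝ f (circleMap 0 s θ) (circleMap 0 1 θ))
    (ut := fun s θ => fderiv ℝ f (circleMap 0 s θ) (circleMap 0 s θ * Complex.I))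
    (fun s hs θ => hasDerivAt_polar_radius hr hf hs θ)
    (fun s hs θ => hasDerivAt_polar_angle hr hf hs θ)
    (continuousOn_polar_radius hr hf) (continuousOn_polar_angle hr hf)
    (fun s _ => by rw [circleMap_pi_eq]) hs
  simp only [wedge_polar] at this
  exact this

lemma two_areaFn_le {r R : ℝ} (hr : 0 ≤ r) {f : ℂ → ℂ}
    (hf : ContDiffOn ℝ 1 f (annulus r R)) {s : ℝ} (hs : s ∈ Ioo r R) :
    2 * areaFn f s ≤ ∫ θ in (-Real.pi)..Real.pi,
      ‖fderiv ℝ f (circleMap 0 s θ) (circleMap 0 s θ * Complex.I)‖ ^ 2 := by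
  have hc : Continuous fun θ =>
      fderiv ℝ f (circleMap 0 s θ) (circleMap 0 s θ * Complex.I) := by
    have := (continuousOn_polar_angle hr hf).comp (f := fun θ : ℝ => (s, θ)) (s := univ)
      (by fun_prop) (fun θ _ => ⟨hs, mem_univ _⟩)
    exact continuousOn_univ.1 this
  have := isoperimetric (fun θ => hasDerivAt_polar_angle hr hf hs θ) hc
    (by rw [circleMap_pi_eq])
  unfold areaFn
  linarith

lemma continuousOn_jac {r R : ℝ} {f : ℂ → ℂ} (hf : ContDiffOn ℝ 1 f (annulus r R)) :
    ContinuousOn (jac f) (annulus r R) := by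
  have h1 := hf.continuousOn_fderiv_of_isOpen (isOpen_annulus r R) le_rfl
  have : jac f = fun z => wedge (fderiv ℝ f z 1) (fderiv ℝ f z Complex.I) := by
    ext z; exact det_eq_wedge _
  rw [this]
  exact wedge_continuousOn (h1.clm_apply continuousOn_const) (h1.clm_apply continuousOn_const)

lemma integrableOn_subannulus {r R s t : ℝ} (hs : r < s) (ht : t < R) {F : ℂ → ℝ}
    (hF : ContinuousOn F (annulus r R)) : IntegrableOn F (annulus s t) := by
  have hK : IsCompact {z : ℂ | s ≤ ‖z‖ ∧ ‖z‖ ≤ t} := by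
    apply (isCompact_closedBall (0 : ℂ) t).of_isClosed_subset
    · exact (isClosed_le continuous_const continuous_norm).inter
        (isClosed_le continuous_norm continuous_const)
    · intro z hz; simpa using hz.2
  have h1 : IntegrableOn F {z : ℂ | s ≤ ‖z‖ ∧ ‖z‖ ≤ t} :=
    (hF.mono fun z hz => ⟨hs.trans_le hz.1, hz.2.trans_lt ht⟩).integrableOn_compact hK
  exact h1.mono_set fun z hz => ⟨hz.1.le, hz.2.le⟩

lemma continuousOn_polar_comp {r R : ℝ} (hr : 0 ≤ r) {F : ℂ → ℝ}
    (hF : ContinuousOn F (annulus r R)) :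
    ContinuousOn (fun p : ℝ × ℝ => p.1 * F (circleMap 0 p.1 p.2)) (Ioo r R ×ˢ univ) :=
  continuous_fst.continuousOn.mul (hF.comp continuous_circleMap_uncurry.continuousOn
    (fun p hp => circleMap_mem_annulus hr hp.1 p.2))

lemma polar_integral {r R s t : ℝ} (hr : 0 ≤ r) (hs : r < s) (hst : s ≤ t) (ht : t < R) {F : ℂ → ℝ}
    (hF : ContinuousOn F (annulus r R)) :
    ∫ z in annulus s t, F z =
      ∫ σ in s..t, ∫ θ in (-Real.pi)..Real.pi, σ * F (circleMap 0 σ θ) := by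
  have hpi := Real.pi_pos
  rw [← integral_indicator (isOpen_annulus s t).measurableSet,
    ← Complex.integral_comp_polarCoord_symm, polarCoord_target]
  have hsub : Ioo s t ×ˢ Ioo (-Real.pi) Real.pi ⊆ Ioi (0 : ℝ) ×ˢ Ioo (-Real.pi) Real.pi :=
    prod_mono (fun σ hσ => hr.trans_lt (hs.trans hσ.1)) subset_rfl
  have e1 : ∀ p : ℝ × ℝ, Complex.polarCoord.symm p = circleMap 0 p.1 p.2 := by
    intro p
    rw [Complex.polarCoord_symm_apply, circleMap_zero, Complex.exp_mul_I]
    push_cast; ring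
  rw [setIntegral_eq_of_subset_of_forall_sdiff_eq_zero
    (measurableSet_Ioi.prod measurableSet_Ioo) hsub]
  · have e2 : ∫ p in Ioo s t ×ˢ Ioo (-Real.pi) Real.pi,
        p.1 • (annulus s t).indicator F (Complex.polarCoord.symm p) =
        ∫ p in Ioo s t ×ˢ Ioo (-Real.pi) Real.pi, p.1 * F (circleMap 0 p.1 p.2) := by
      apply setIntegral_congr_fun (measurableSet_Ioo.prod measurableSet_Ioo)
      intro p hp
      simp only [e1, smul_eq_mul]
      rw [indicator_of_mem (circleMap_mem_annulus (hr.trans hs.le) hp.1 p.2)]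
    rw [e2, Measure.volume_eq_prod, setIntegral_prod]
    · rw [intervalIntegral.integral_of_le hst, integral_Ioc_eq_integral_Ioo]
      congr 1; ext σ
      rw [intervalIntegral.integral_of_le (by linarith), integral_Ioc_eq_integral_Ioo]
    · have : IntegrableOn (fun p : ℝ × ℝ => p.1 * F (circleMap 0 p.1 p.2))
          (Icc s t ×ˢ Icc (-Real.pi) Real.pi) := by
        apply ContinuousOn.integrableOn_compact (isCompact_Icc.prod isCompact_Icc)
        exact (continuousOn_polar_comp hr hF).mono
          (prod_mono (fun σ hσ => ⟨hs.trans_le hσ.1, hσ.2.trans_lt ht⟩) (subset_univ _))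
      exact this.mono_set (prod_mono Ioo_subset_Icc_self Ioo_subset_Icc_self)
  · intro p hp
    rw [indicator_of_notMem, smul_zero]
    intro hmem
    rw [e1] at hmem
    have hp0 : 0 < p.1 := hp.1.1
    simp only [mem_ofPred_eq, norm_circleMap_zero, abs_of_pos hp0] at hmem
    exact hp.2 ⟨hmem, hp.1.2⟩

lemma continuousOn_angular_integral {r R : ℝ} {G : ℝ → ℝ → ℝ}
    (hG : ContinuousOn (fun p : ℝ × ℝ => G p.1 p.2) (Ioo r R ×ˢ univ)) :
    ContinuousOn (fun σ => ∫ θ in (-Real.pi)..Real.pi, G σ θ) (Ioo r R) := by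
  rw [continuousOn_iff_continuous_domRestrict]
  have : Continuous (Function.uncurry fun (σ : Ioo r R) (θ : ℝ) => G σ θ) := by
    have := hG.comp_continuous (f := fun p : Ioo r R × ℝ => ((p.1 : ℝ), p.2)) (by fun_prop)
      (fun p => ⟨p.1.2, mem_univ _⟩)
    exact this
  exact intervalIntegral.continuous_parametric_intervalIntegral_of_continuous' this _ _

/-- The growth of the enclosed area is the signed area swept out by `f`. -/
lemma areaFn_sub {r R s t : ℝ} (hr : 0 ≤ r) {f : ℂ → ℂ}
    (hf : ContDiffOn ℝ 1 f (annulus r R)) (hs : r < s) (hst : s ≤ t) (ht : t < R) :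
    areaFn f t - areaFn f s = ∫ z in annulus s t, jac f z := by
  rw [polar_integral hr hs hst ht (continuousOn_jac hf)]
  symm
  have hsub : uIcc s t ⊆ Ioo r R := by
    rw [uIcc_of_le hst]; exact fun σ hσ => ⟨hs.trans_le hσ.1, hσ.2.trans_lt ht⟩
  apply intervalIntegral.integral_eq_sub_of_hasDerivAt
  · exact fun σ hσ => hasDerivAt_areaFn hr hf (hsub hσ)
  · apply ContinuousOn.intervalIntegrable
    exact (continuousOn_angular_integral
      (continuousOn_polar_comp hr (continuousOn_jac hf))).mono hsub

/-! ### Boundary behaviour of the enclosed area -/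

lemma isCompact_closure_annulus (r R : ℝ) : IsCompact (closure (annulus r R)) := by
  apply (isCompact_closedBall (0 : ℂ) R).of_isClosed_subset isClosed_closure
  apply closure_minimal _ Metric.isClosed_closedBall
  intro z hz; simpa using hz.2.le

lemma norm_mem_Icc_of_mem_closure {r R : ℝ} {z : ℂ} (hz : z ∈ closure (annulus r R)) :
    ‖z‖ ∈ Icc r R := by
  have hcl : IsClosed {z : ℂ | r ≤ ‖z‖ ∧ ‖z‖ ≤ R} :=
    (isClosed_le continuous_const continuous_norm).inter
      (isClosed_le continuous_norm continuous_const)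
  have hsub : annulus r R ⊆ {z : ℂ | r ≤ ‖z‖ ∧ ‖z‖ ≤ R} := fun z hz => ⟨hz.1.le, hz.2.le⟩
  exact closure_minimal hsub hcl hz

lemma near_inner {r R rs α : ℝ} (hrR : r < R) {h : ℂ → ℂ}
    (hcont : ContinuousOn h (closure (annulus r R)))
    (hinner : ∀ z : ℂ, ‖z‖ = r → ‖h z‖ = rs) (hα : rs < α) :
    ∃ s₁ ∈ Ioo r R, ∀ z ∈ annulus r R, ‖z‖ < s₁ → ‖h z‖ < α := by
  set S : Set ℂ := closure (annulus r R) ∩ (fun z => ‖h z‖) ⁻¹' Ici α with hS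
  have hSc : IsCompact S :=
    (isCompact_closure_annulus r R).of_isClosed_subset
      (hcont.norm.preimage_isClosed_of_isClosed isClosed_closure isClosed_Ici) inter_subset_left
  obtain ⟨m, hm, hmS⟩ : ∃ m > r, ∀ z ∈ S, m ≤ ‖z‖ := by
    rcases S.eq_empty_or_nonempty with h0 | h0
    · exact ⟨r + 1, by linarith, by simp [h0]⟩
    · obtain ⟨z₀, hz₀, hmin⟩ := hSc.exists_isMinOn h0 continuous_norm.continuousOn
      refine ⟨‖z₀‖, ?_, fun z hz => hmin hz⟩
      refine lt_of_le_of_ne (norm_mem_Icc_of_mem_closure hz₀.1).1 fun heq => ?_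
      have h1 := hinner z₀ heq.symm
      have h2 : α ≤ ‖h z₀‖ := hz₀.2
      linarith
  refine ⟨min m ((r + R) / 2), ⟨lt_min hm (by linarith), min_lt_of_right_lt (by linarith)⟩, ?_⟩
  intro z hz hzm
  by_contra hcon
  have := hmS z ⟨subset_closure hz, not_lt.1 hcon⟩
  have := hzm.trans_le (min_le_left _ _)
  linarith

lemma near_outer {r R Rs β : ℝ} (hrR : r < R) {h : ℂ → ℂ}
    (hcont : ContinuousOn h (closure (annulus r R)))
    (houter : ∀ z : ℂ, ‖z‖ = R → ‖h z‖ = Rs) (hβ : β < Rs) :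
    ∃ t₁ ∈ Ioo r R, ∀ z ∈ annulus r R, t₁ < ‖z‖ → β < ‖h z‖ := by
  set S : Set ℂ := closure (annulus r R) ∩ (fun z => ‖h z‖) ⁻¹' Iic β with hS
  have hSc : IsCompact S :=
    (isCompact_closure_annulus r R).of_isClosed_subset
      (hcont.norm.preimage_isClosed_of_isClosed isClosed_closure isClosed_Iic) inter_subset_left
  obtain ⟨m, hm, hmS⟩ : ∃ m < R, ∀ z ∈ S, ‖z‖ ≤ m := by
    rcases S.eq_empty_or_nonempty with h0 | h0
    · exact ⟨R - 1, by linarith, by simp [h0]⟩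
    · obtain ⟨z₀, hz₀, hmax⟩ := hSc.exists_isMaxOn h0 continuous_norm.continuousOn
      refine ⟨‖z₀‖, ?_, fun z hz => hmax hz⟩
      refine lt_of_le_of_ne (norm_mem_Icc_of_mem_closure hz₀.1).2 fun heq => ?_
      have h1 := houter z₀ heq
      have h2 : ‖h z₀‖ ≤ β := hz₀.2
      linarith
  refine ⟨max m ((r + R) / 2), ⟨lt_max_of_lt_right (by linarith), max_lt hm (by linarith)⟩, ?_⟩
  intro z hz hzm
  by_contra hcon
  have := hmS z ⟨subset_closure hz, not_lt.1 hcon⟩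
  have := (le_max_left _ _).trans_lt hzm
  linarith

/-- If `T` vanishes near the inner boundary circle of the target annulus and is the identity near
the outer one, then the area enclosed by the images of the circles under `h` tends to the integral
of the Jacobian of `T` at the outer boundary. This integral does not depend on `h`, so it can be
computed from `h = id`. -/
lemma tendsto_areaFn_integral {r R rs Rs α β : ℝ} (hr : 0 ≤ r) (hrR : r < R)
    (hα : rs < α) (hβ : β < Rs) {T : ℂ → ℂ} (hT : ContDiff ℝ 1 T)
    (hT0 : ∀ w, ‖w‖ < α → T w = 0) (hT1 : ∀ w, β < ‖w‖ → T w = w)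
    {h : ℂ → ℂ} (hC : ContDiffOn ℝ 1 h (annulus r R))
    (hbij : BijOn h (annulus r R) (annulus rs Rs))
    (horient : ∀ z ∈ annulus r R, 0 < jac h z)
    (hcont : ContinuousOn h (closure (annulus r R)))
    (hinner : ∀ z : ℂ, ‖z‖ = r → ‖h z‖ = rs)
    (houter : ∀ z : ℂ, ‖z‖ = R → ‖h z‖ = Rs) :
    Tendsto (areaFn h) (𝓝[<] R) (𝓝 (∫ w in annulus rs Rs, jac T w)) := by
  obtain ⟨s₁, hs₁, hin⟩ := near_inner hrR hcont hinner hα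
  obtain ⟨t₁, ht₁, hout⟩ := near_outer hrR hcont houter hβ
  set f : ℂ → ℂ := T ∘ h with hf
  have hfC : ContDiffOn ℝ 1 f (annulus r R) := hT.comp_contDiffOn hC
  obtain ⟨s₂, hs₂⟩ : ∃ s₂, s₂ ∈ Ioo r s₁ := exists_between hs₁.1
  have hf0 : ∀ z ∈ annulus r s₁, f z = 0 := fun z hz =>
    hT0 _ (hin z ⟨hz.1, hz.2.trans hs₁.2⟩ hz.2)
  have hj0 : ∀ z ∈ annulus r s₁, jac f z = 0 := by
    intro z hz
    have : f =ᶠ[𝓝 z] fun _ => 0 := by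
      filter_upwards [(isOpen_annulus r s₁).mem_nhds hz] with w hw using hf0 w hw
    rw [jac, det_eq_wedge, this.fderiv_eq]
    simp [wedge]
  have ha0 : areaFn f s₂ = 0 := by
    have : ∀ θ, f (circleMap 0 s₂ θ) = 0 := fun θ => hf0 _ (circleMap_mem_annulus hr hs₂ θ)
    simp [areaFn, this, wedge]
  have hae : ∀ t ∈ Ioo t₁ R, areaFn f t = areaFn h t := by
    intro t ht
    have e : ∀ z ∈ annulus t₁ R, f z = h z := fun z hz =>
      hT1 _ (hout z ⟨ht₁.1.trans hz.1, hz.2⟩ hz.1)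
    have : ∀ θ, f (circleMap 0 t θ) = h (circleMap 0 t θ) ∧
        fderiv ℝ f (circleMap 0 t θ) = fderiv ℝ h (circleMap 0 t θ) := by
      intro θ
      have hz := circleMap_mem_annulus (hr.trans ht₁.1.le) ht θ
      refine ⟨e _ hz, Filter.EventuallyEq.fderiv_eq ?_⟩
      filter_upwards [(isOpen_annulus t₁ R).mem_nhds hz] with w hw using e w hw
    simp only [areaFn, fun θ => (this θ).1, fun θ => (this θ).2]
  have hfd : ∀ z ∈ annulus r R, HasFDerivWithinAt h (fderiv ℝ h z) (annulus r R) z := fun z hz =>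
    (hasFDerivAt_of_annulus hC hz).hasFDerivWithinAt
  have hjac : ∀ z ∈ annulus r R, |(fderiv ℝ h z).det| • jac T (h z) = jac f z := by
    intro z hz
    have hp := horient z hz
    have hchain : fderiv ℝ f z = (fderiv ℝ T (h z)).comp (fderiv ℝ h z) :=
      fderiv_comp z (hT.differentiable one_ne_zero _)
        (hasFDerivAt_of_annulus hC hz).differentiableAt
    have : |(fderiv ℝ h z).det| = jac h z := abs_of_pos hp
    rw [this]
    simp only [jac, hchain, ContinuousLinearMap.toLinearMap_comp, LinearMap.det_comp, smul_eq_mul]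
    ring
  have hTint : IntegrableOn (jac T) (annulus rs Rs) := by
    have hTc : ContinuousOn (jac T) (annulus (rs - 1) (Rs + 1)) :=
      continuousOn_jac hT.contDiffOn
    exact integrableOn_subannulus (by linarith) (by linarith) hTc
  have hm := (isOpen_annulus r R).measurableSet
  have hfint : IntegrableOn (jac f) (annulus r R) := by
    have := (integrableOn_image_iff_integrableOn_abs_det_fderiv_smul volume hm hfd hbij.injOn
      (jac T)).1 (by rwa [hbij.image_eq])
    exact this.congr_fun hjac hm
  have hsub₂ : annulus s₂ R ⊆ annulus r R := fun z hz => ⟨hs₂.1.trans hz.1, hz.2⟩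
  have hval : ∫ w in annulus rs Rs, jac T w = ∫ z in annulus s₂ R, jac f z := by
    rw [← hbij.image_eq, integral_image_eq_integral_abs_det_fderiv_smul volume hm hfd hbij.injOn,
      setIntegral_congr_fun hm hjac]
    apply setIntegral_eq_of_subset_of_forall_sdiff_eq_zero hm hsub₂
    intro z hz
    refine hj0 z ⟨hz.1.1, ?_⟩
    by_contra hcon
    exact hz.2 ⟨hs₂.2.trans_le (not_lt.1 hcon), hz.1.2⟩
  rw [hval]
  have hcov : AECover (volume.restrict (annulus s₂ R)) (𝓝[<] R) (fun t => annulus s₂ t) := by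
    refine ⟨?_, fun t => (isOpen_annulus s₂ t).measurableSet⟩
    rw [ae_restrict_iff' (isOpen_annulus s₂ R).measurableSet]
    refine Eventually.of_forall fun z hz => ?_
    filter_upwards [Ioo_mem_nhdsLT hz.2] with t ht using ⟨hz.1, ht.1⟩
  have hlim := hcov.integral_tendsto_of_countably_generated
    (f := jac f) (hfint.mono_set hsub₂)
  refine hlim.congr' ?_
  filter_upwards [Ioo_mem_nhdsLT (max_lt ht₁.2 (hs₂.2.trans hs₁.2))] with t ht
  have ht1 : t₁ < t := (le_max_left _ _).trans_lt ht.1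
  have ht2 : s₂ < t := (le_max_right _ _).trans_lt ht.1
  have hsub₃ : annulus s₂ t ⊆ annulus s₂ R := fun z hz => ⟨hz.1, hz.2.trans ht.2⟩
  rw [Measure.restrict_restrict (isOpen_annulus s₂ t).measurableSet,
    inter_eq_left.2 hsub₃,
    ← areaFn_sub hr hfC hs₂.1 ht2.le ht.2, ha0, sub_zero, hae t ⟨ht1, ht.2⟩]

lemma areaFn_id (s : ℝ) : areaFn id s = Real.pi * s ^ 2 := by
  have : ∀ θ, wedge (id (circleMap 0 s θ))
      (fderiv ℝ id (circleMap 0 s θ) (circleMap 0 s θ * Complex.I)) = s ^ 2 := by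
    intro θ
    simp only [fderiv_id, id, ContinuousLinearMap.id_apply, wedge, circleMap_zero,
      Complex.exp_ofReal_mul_I_re, Complex.mul_re, Complex.mul_im,
      Complex.exp_ofReal_mul_I_im, Complex.ofReal_re, Complex.ofReal_im, Complex.I_re,
      Complex.I_im]
    linear_combination s ^ 2 * Real.cos_sq_add_sin_sq θ
  simp only [areaFn, this, intervalIntegral.integral_const, smul_eq_mul]
  ring

lemma jac_id (z : ℂ) : jac id z = 1 := by
  simp [jac]

/-- A `C¹` map that collapses a neighbourhood of the inner disc and is the identity away from a
larger disc. -/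
lemma exists_collapse {α β : ℝ} (hα : 0 < α) (hαβ : α < β) :
    ∃ T : ℂ → ℂ, ContDiff ℝ 1 T ∧ (∀ w, ‖w‖ < α → T w = 0) ∧ (∀ w, β < ‖w‖ → T w = w) := by
  have hd : 0 < β ^ 2 - α ^ 2 := by nlinarith
  refine ⟨fun w => Real.smoothTransition ((‖w‖ ^ 2 - α ^ 2) / (β ^ 2 - α ^ 2)) • w, ?_, ?_, ?_⟩
  · refine ContDiff.smul (Real.smoothTransition.contDiff.comp ?_) contDiff_id
    exact ((contDiff_norm_sq ℝ).sub contDiff_const).div_const _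
  · intro w hw
    have : (‖w‖ ^ 2 - α ^ 2) / (β ^ 2 - α ^ 2) ≤ 0 := by
      apply div_nonpos_of_nonpos_of_nonneg _ hd.le
      nlinarith [norm_nonneg w]
    simp only [Real.smoothTransition.zero_of_nonpos this, zero_smul]
  · intro w hw
    have : 1 ≤ (‖w‖ ^ 2 - α ^ 2) / (β ^ 2 - α ^ 2) := by
      rw [le_div_iff₀ hd]
      nlinarith [norm_nonneg w]
    simp only [Real.smoothTransition.one_of_one_le this, one_smul]

/-- The limit is `∫ J_T` for a collapsing map `T`, whatever `h` is; comparing with the identity of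
the target annulus gives its value. -/
lemma tendsto_areaFn {r R rs Rs : ℝ} (hr : 0 ≤ r) (hrR : r < R)
    (hrs : 0 < rs) (hrsRs : rs < Rs)
    {h : ℂ → ℂ} (hC : ContDiffOn ℝ 1 h (annulus r R))
    (hbij : BijOn h (annulus r R) (annulus rs Rs))
    (horient : ∀ z ∈ annulus r R, 0 < jac h z)
    (hcont : ContinuousOn h (closure (annulus r R)))
    (hinner : ∀ z : ℂ, ‖z‖ = r → ‖h z‖ = rs)
    (houter : ∀ z : ℂ, ‖z‖ = R → ‖h z‖ = Rs) :
    Tendsto (areaFn h) (𝓝[<] R) (𝓝 (Real.pi * Rs ^ 2)) := by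
  obtain ⟨α, hα⟩ := exists_between hrsRs
  obtain ⟨β, hβ⟩ := exists_between hα.2
  obtain ⟨T, hT, hT0, hT1⟩ := exists_collapse (hrs.trans hα.1) hβ.1
  have h1 := tendsto_areaFn_integral hr hrR hα.1 hβ.2 hT hT0 hT1 hC hbij horient hcont hinner houter
  have h2 := tendsto_areaFn_integral hrs.le hrsRs hα.1 hβ.2 hT hT0 hT1 (h := id)
    contDiff_id.contDiffOn (bijOn_id _) (fun z _ => by rw [jac_id]; exact one_pos)
    continuousOn_id (fun z hz => hz) (fun z hz => hz)
  have h3 : Tendsto (areaFn id) (𝓝[<] Rs) (𝓝 (Real.pi * Rs ^ 2)) := by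
    have : areaFn id = fun s => Real.pi * s ^ 2 := funext areaFn_id
    rw [this]
    have hc : Continuous fun s : ℝ => Real.pi * s ^ 2 := by fun_prop
    exact (hc.tendsto Rs).mono_left nhdsWithin_le_nhds
  rwa [tendsto_nhds_unique h2 h3] at h1

/-- The image of `{s < |z| < R}` is contained in the target annulus, so the enclosed area can grow
from `s` to `R` by at most `π (Rs² - rs²)`; its limit at `R` being `π Rs²`, the bound follows. -/
lemma le_areaFn {r R rs Rs : ℝ} (hr : 0 ≤ r) (hrR : r < R)
    (hrs : 0 < rs) (hrsRs : rs < Rs)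
    {h : ℂ → ℂ} (hC : ContDiffOn ℝ 1 h (annulus r R))
    (hbij : BijOn h (annulus r R) (annulus rs Rs))
    (horient : ∀ z ∈ annulus r R, 0 < jac h z)
    (hcont : ContinuousOn h (closure (annulus r R)))
    (hinner : ∀ z : ℂ, ‖z‖ = r → ‖h z‖ = rs)
    (houter : ∀ z : ℂ, ‖z‖ = R → ‖h z‖ = Rs) {s : ℝ} (hs : s ∈ Ioo r R) :
    Real.pi * rs ^ 2 ≤ areaFn h s := by
  have hlim := (tendsto_areaFn hr hrR hrs hrsRs hC hbij horient hcont hinner houter).sub_const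
    (areaFn h s)
  have hvol : ∫ w in annulus rs Rs, (1 : ℝ) = Real.pi * Rs ^ 2 - Real.pi * rs ^ 2 := by
    have := areaFn_sub (R := Rs + 1) le_rfl (f := id) contDiff_id.contDiffOn hrs hrsRs.le
      (by linarith)
    rw [areaFn_id, areaFn_id] at this
    simp only [jac_id] at this
    exact this.symm
  have hle : Real.pi * Rs ^ 2 - areaFn h s ≤ Real.pi * Rs ^ 2 - Real.pi * rs ^ 2 := by
    refine le_of_tendsto hlim ?_
    filter_upwards [Ioo_mem_nhdsLT hs.2] with t ht
    have hsub : annulus s t ⊆ annulus r R := fun z hz => ⟨hs.1.trans hz.1, hz.2.trans ht.2⟩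
    have hm := (isOpen_annulus s t).measurableSet
    have himg := integral_image_eq_integral_abs_det_fderiv_smul volume hm
      (fun z hz => (hasFDerivAt_of_annulus hC (hsub hz)).hasFDerivWithinAt)
      (hbij.injOn.mono hsub) (fun _ => (1 : ℝ))
    have : ∫ z in annulus s t, jac h z = ∫ w in h '' annulus s t, (1 : ℝ) := by
      rw [himg]
      refine setIntegral_congr_fun hm fun z hz => ?_
      have : |(fderiv ℝ h z).det| = jac h z := abs_of_pos (horient z (hsub hz))
      simp only [this, smul_eq_mul, mul_one]
    rw [areaFn_sub hr hC hs.1 ht.1.le ht.2, this, ← hvol]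
    apply setIntegral_mono_set
    · exact integrableOn_subannulus (r := rs - 1) (R := Rs + 1) (by linarith) (by linarith)
        continuousOn_const
    · exact Eventually.of_forall fun _ => zero_le_one
    · exact ((image_mono hsub).trans hbij.image_eq.subset).eventuallyLE
  linarith

/-! ### Riccati equation and energy bound -/

/-- The Riccati solution stays below the nondecreasing weight: where `Φ > λ`, the function `Φ`
decreases, so it cannot cross `λ` upwards. -/
lemma riccati_le {r₀ R : ℝ} {lam Φ Φ' : ℝ → ℝ} (hr₀ : 0 < r₀)
    (hlamc : ContinuousOn lam (Icc r₀ R)) (hlampos : ∀ s ∈ Icc r₀ R, 0 < lam s)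
    (hlammono : MonotoneOn lam (Icc r₀ R))
    (hΦd : ∀ s ∈ Icc r₀ R, HasDerivWithinAt Φ (Φ' s) (Icc r₀ R) s)
    (hΦode : ∀ s ∈ Icc r₀ R, s * lam s * Φ' s = lam s ^ 2 - Φ s ^ 2)
    (hΦr₀ : Φ r₀ = 0) {t : ℝ} (ht : t ∈ Icc r₀ R) : Φ t ≤ lam t := by
  by_contra! hcon
  have hΦc : ContinuousOn Φ (Icc r₀ R) := fun s hs => (hΦd s hs).continuousWithinAt
  have hsub : Icc r₀ t ⊆ Icc r₀ R := Icc_subset_Icc_right ht.2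
  set S : Set ℝ := Icc r₀ t ∩ (fun s => lam s - Φ s) ⁻¹' Ici 0 with hS
  have hSc : IsCompact S := isCompact_Icc.of_isClosed_subset
    (((hlamc.sub hΦc).mono hsub).preimage_isClosed_of_isClosed isClosed_Icc isClosed_Ici)
    inter_subset_left
  have hr₀S : r₀ ∈ S := by
    refine ⟨⟨le_rfl, ht.1⟩, ?_⟩
    have := hlampos r₀ ⟨le_rfl, ht.1.trans ht.2⟩
    simp only [mem_preimage, mem_Ici, hΦr₀, sub_zero]
    exact this.le
  obtain ⟨m, hmS, hmax⟩ := hSc.exists_isMaxOn ⟨r₀, hr₀S⟩ continuousOn_id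
  have hmΦ : Φ m ≤ lam m := sub_nonneg.1 hmS.2
  have hsub' : Icc m t ⊆ Icc r₀ R := fun s hs => ⟨hmS.1.1.trans hs.1, hs.2.trans ht.2⟩
  have hd : ∀ x ∈ Ioo m t, HasDerivAt Φ (Φ' x) x := by
    intro x hx
    exact (hΦd x (hsub' (Ioo_subset_Icc_self hx))).hasDerivAt
      (Icc_mem_nhds (hmS.1.1.trans_lt hx.1) (hx.2.trans_le ht.2))
  have hanti : AntitoneOn Φ (Icc m t) := by
    apply antitoneOn_of_deriv_nonpos (convex_Icc m t) (hΦc.mono hsub')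
    · rw [interior_Icc]
      exact fun x hx => (hd x hx).differentiableAt.differentiableWithinAt
    · rw [interior_Icc]
      intro x hx
      rw [(hd x hx).deriv]
      have hx' := hsub' (Ioo_subset_Icc_self hx)
      have hgt : lam x < Φ x := by
        by_contra! hle
        have : x ≤ m := hmax (⟨⟨hx'.1, hx.2.le⟩, sub_nonneg.2 hle⟩ : x ∈ S)
        linarith [hx.1]
      have hl := hlampos x hx'
      have hp : 0 < x * lam x := mul_pos (hr₀.trans_le hx'.1) hl
      by_contra! hpos
      have h1 := mul_pos hp hpos
      rw [hΦode x hx'] at h1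
      nlinarith
  have h1 := hanti ⟨le_rfl, hmS.1.2⟩ ⟨hmS.1.2, le_rfl⟩ hmS.1.2
  have h2 := hlammono (hsub hmS.1) ht hmS.1.2
  linarith

/-- Completing the square: the pointwise estimate behind the bound on `[r₀,R]`. -/
lemma pointwise_bound {s l φ φ' : ℝ} (hs : 0 < s) (hl : 0 < l)
    (hode : s * l * φ' = l ^ 2 - φ ^ 2) (D : ℂ →L[ℝ] ℂ) (θ : ℝ) :
    2 * φ * (s * LinearMap.det D.toLinearMap) +
      φ' * ‖D (circleMap 0 s θ * Complex.I)‖ ^ 2 ≤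
      s * (l * (‖D 1‖ ^ 2 + ‖D Complex.I‖ ^ 2)) := by
  have hN := norm_sq_polar D s θ
  rw [← wedge_polar D s θ]
  set p := D (circleMap 0 1 θ)
  set q := D (circleMap 0 s θ * Complex.I)
  have hsl : 0 < s * l := mul_pos hs hl
  refine le_of_mul_le_mul_left ?_ hsl
  have h1 := two_wedge_le ((s * l : ℝ) • p) ((φ : ℝ) • q)
  have e : wedge ((s * l : ℝ) • p) ((φ : ℝ) • q) = s * l * φ * wedge p q := by
    simp only [wedge, Complex.smul_re, Complex.smul_im, smul_eq_mul]; ring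
  rw [e, norm_smul, norm_smul, mul_pow, mul_pow, Real.norm_eq_abs, Real.norm_eq_abs, sq_abs,
    sq_abs] at h1
  calc s * l * (2 * φ * wedge p q + φ' * ‖q‖ ^ 2)
      = 2 * (s * l * φ * wedge p q) + (s * l * φ') * ‖q‖ ^ 2 := by ring
    _ = 2 * (s * l * φ * wedge p q) + (l ^ 2 - φ ^ 2) * ‖q‖ ^ 2 := by rw [hode]
    _ ≤ l ^ 2 * (s ^ 2 * ‖p‖ ^ 2 + ‖q‖ ^ 2) := by linarith
    _ = s * l * (s * (l * (‖D 1‖ ^ 2 + ‖D Complex.I‖ ^ 2))) := by rw [← hN]; ring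

lemma pointwise_bound_inner {s l : ℝ} (hs : 0 < s) (hl : 0 < l) (D : ℂ →L[ℝ] ℂ) (θ : ℝ) :
    l / s * ‖D (circleMap 0 s θ * Complex.I)‖ ^ 2 ≤
      s * (l * (‖D 1‖ ^ 2 + ‖D Complex.I‖ ^ 2)) := by
  have := pointwise_bound (φ := 0) (φ' := l / s) hs hl (by field_simp; ring) D θ
  simpa using this

/-- The energy is at least its part over `A(s₀,t₀)`. The circles in `[s₀,r₀]` contribute at least
`2π·r_*²·λ(σ)/σ` each, by the isoperimetric inequality; those in `[r₀,t₀]` contribute at least the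
derivative of `2·Φ·areaFn h`, which vanishes at `r₀`. -/
lemma energy_subannulus_bound {r R rs r₀ s₀ t₀ : ℝ} (hr : 0 < r)
    (hs₀ : s₀ ∈ Ioo r r₀) (ht₀ : t₀ ∈ Ioo r₀ R)
    {lam Φ Φ' : ℝ → ℝ}
    (hlamc : ContinuousOn lam (Icc r R))
    (hlampos : ∀ s ∈ Icc r R, 0 < lam s)
    (hlammono : MonotoneOn lam (Icc r R))
    (hΦd : ∀ s ∈ Icc r₀ R, HasDerivWithinAt Φ (Φ' s) (Icc r₀ R) s)
    (hΦ'c : ContinuousOn Φ' (Icc r₀ R))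
    (hΦode : ∀ s ∈ Icc r₀ R, s * lam s * Φ' s = lam s ^ 2 - Φ s ^ 2)
    (hΦr₀ : Φ r₀ = 0)
    (hΦnn : ∀ s ∈ Icc r₀ R, 0 ≤ Φ s)
    {h : ℂ → ℂ} (hC : ContDiffOn ℝ 1 h (annulus r R))
    (harea : ∀ s ∈ Ioo r R, Real.pi * rs ^ 2 ≤ areaFn h s) :
    ENNReal.ofReal (2 * Φ t₀ * areaFn h t₀ + 2 * Real.pi * rs ^ 2 * ∫ s in s₀..r₀, lam s / s) ≤
    ∫⁻ z in annulus r R, ENNReal.ofReal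
      (lam ‖z‖ * (‖fderiv ℝ h z 1‖ ^ 2 + ‖fderiv ℝ h z Complex.I‖ ^ 2)) := by
  have hpi := Real.pi_pos
  have hppi : -Real.pi ≤ Real.pi := by linarith
  have hr₀ : r₀ ∈ Ioo r R := ⟨hs₀.1.trans hs₀.2, ht₀.1.trans ht₀.2⟩
  set F : ℂ → ℝ := fun z => lam ‖z‖ * (‖fderiv ℝ h z 1‖ ^ 2 + ‖fderiv ℝ h z Complex.I‖ ^ 2) with hF
  have hFc : ContinuousOn F (annulus r R) := by
    have h1 := hC.continuousOn_fderiv_of_isOpen (isOpen_annulus r R) le_rfl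
    refine (hlamc.comp continuous_norm.continuousOn fun z hz => ⟨hz.1.le, hz.2.le⟩).mul ?_
    exact ((h1.clm_apply continuousOn_const).norm.pow 2).add
      ((h1.clm_apply continuousOn_const).norm.pow 2)
  have hsub : annulus s₀ t₀ ⊆ annulus r R := fun z hz =>
    ⟨hs₀.1.trans hz.1, hz.2.trans ht₀.2⟩
  have hFpos : ∀ z ∈ annulus r R, 0 ≤ F z := fun z hz => by
    have := hlampos ‖z‖ ⟨hz.1.le, hz.2.le⟩
    positivity
  have hst : s₀ ≤ t₀ := (hs₀.2.trans ht₀.1).le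
  refine le_trans ?_ (lintegral_mono_set hsub)
  rw [← ofReal_integral_eq_lintegral_ofReal (integrableOn_subannulus hs₀.1 ht₀.2 hFc)
    ((ae_restrict_iff' (isOpen_annulus s₀ t₀).measurableSet).2
      (Eventually.of_forall fun z hz => hFpos z (hsub hz))),
    polar_integral hr.le hs₀.1 hst ht₀.2 hFc]
  apply ENNReal.ofReal_le_ofReal
  -- `g` is the energy density in the radial variable
  set g : ℝ → ℝ := fun σ => ∫ θ in (-Real.pi)..Real.pi, σ * F (circleMap 0 σ θ) with hg
  have hgc : ContinuousOn g (Ioo r R) :=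
    continuousOn_angular_integral (continuousOn_polar_comp hr.le hFc)
  have hslice : ∀ {G : ℝ → ℝ → ℝ},
      ContinuousOn (fun p : ℝ × ℝ => G p.1 p.2) (Ioo r R ×ˢ univ) →
      ∀ σ ∈ Ioo r R, Continuous (G σ) := by
    intro G hG σ hσ
    have := hG.comp (f := fun θ : ℝ => (σ, θ)) (s := univ) (by fun_prop)
      (fun θ _ => ⟨hσ, mem_univ _⟩)
    exact continuousOn_univ.1 this
  have hFσ : ∀ σ ∈ Ioo r R, Continuous fun θ => σ * F (circleMap 0 σ θ) :=
    hslice (G := fun σ θ => σ * F (circleMap 0 σ θ)) (continuousOn_polar_comp hr.le hFc)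
  have hJσ : ∀ σ ∈ Ioo r R, Continuous fun θ => σ * jac h (circleMap 0 σ θ) :=
    hslice (G := fun σ θ => σ * jac h (circleMap 0 σ θ))
      (continuousOn_polar_comp hr.le (continuousOn_jac hC))
  have hTσ : ∀ σ ∈ Ioo r R, Continuous fun θ =>
      ‖fderiv ℝ h (circleMap 0 σ θ) (circleMap 0 σ θ * Complex.I)‖ ^ 2 :=
    hslice (G := fun σ θ => ‖fderiv ℝ h (circleMap 0 σ θ) (circleMap 0 σ θ * Complex.I)‖ ^ 2)
      ((continuousOn_polar_angle hr.le hC).norm.pow 2)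
  have hFeq : ∀ σ ∈ Ioo r R, ∀ θ, F (circleMap 0 σ θ) = lam σ *
      (‖fderiv ℝ h (circleMap 0 σ θ) 1‖ ^ 2 + ‖fderiv ℝ h (circleMap 0 σ θ) Complex.I‖ ^ 2) := by
    intro σ hσ θ
    simp only [hF, norm_circleMap_zero, abs_of_pos (hr.trans hσ.1)]
  have claim1 : ∀ σ ∈ Ioo r R, 2 * Real.pi * rs ^ 2 * (lam σ / σ) ≤ g σ := by
    intro σ hσ
    have hσ0 : 0 < σ := hr.trans hσ.1
    have hl := hlampos σ (Ioo_subset_Icc_self hσ)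
    have h1 : ∫ θ in (-Real.pi)..Real.pi, lam σ / σ *
        ‖fderiv ℝ h (circleMap 0 σ θ) (circleMap 0 σ θ * Complex.I)‖ ^ 2 ≤ g σ := by
      apply intervalIntegral.integral_mono_on hppi
        ((continuous_const.mul (hTσ σ hσ)).intervalIntegrable _ _)
        ((hFσ σ hσ).intervalIntegrable _ _)
      intro θ _
      rw [hFeq σ hσ θ]
      exact pointwise_bound_inner hσ0 hl _ θ
    rw [intervalIntegral.integral_const_mul] at h1
    have h2 := two_areaFn_le hr.le hC hσ
    have h3 := harea σ hσ
    have h4 : 0 < lam σ / σ := div_pos hl hσ0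
    have h5 := mul_le_mul_of_nonneg_left
      ((mul_le_mul_of_nonneg_left h3 zero_le_two).trans h2) h4.le
    linarith
  have claim2 : ∀ σ ∈ Ico r₀ R, 2 * (Φ' σ * areaFn h σ +
      Φ σ * ∫ θ in (-Real.pi)..Real.pi, σ * jac h (circleMap 0 σ θ)) ≤ g σ := by
    intro σ hσ
    have hσ' : σ ∈ Ioo r R := ⟨hr₀.1.trans_le hσ.1, hσ.2⟩
    have hσ'' : σ ∈ Icc r₀ R := Ico_subset_Icc_self hσ
    have hσ0 : 0 < σ := hr.trans hσ'.1
    have hl := hlampos σ (Ioo_subset_Icc_self hσ')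
    have hsubI : Icc r₀ R ⊆ Icc r R := Icc_subset_Icc_left hr₀.1.le
    have hΦl : Φ σ ≤ lam σ := riccati_le (hr.trans hr₀.1) (hlamc.mono hsubI)
      (fun s hs => hlampos s (hsubI hs)) (hlammono.mono hsubI) hΦd hΦode hΦr₀ hσ''
    have hΦ' : 0 ≤ Φ' σ := by
      by_contra! hneg
      have h1 := mul_neg_of_pos_of_neg (mul_pos hσ0 hl) hneg
      rw [hΦode σ hσ''] at h1
      nlinarith [hΦnn σ hσ'']
    have h1 : ∫ θ in (-Real.pi)..Real.pi, (2 * Φ σ * (σ * jac h (circleMap 0 σ θ)) + Φ' σ *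
        ‖fderiv ℝ h (circleMap 0 σ θ) (circleMap 0 σ θ * Complex.I)‖ ^ 2) ≤ g σ := by
      apply intervalIntegral.integral_mono_on hppi
        (((continuous_const.mul (hJσ σ hσ')).add
          (continuous_const.mul (hTσ σ hσ'))).intervalIntegrable _ _)
        ((hFσ σ hσ').intervalIntegrable _ _)
      intro θ _
      rw [hFeq σ hσ' θ]
      exact pointwise_bound hσ0 hl (hΦode σ hσ'') _ θ
    have c1 : Continuous fun θ => 2 * Φ σ * (σ * jac h (circleMap 0 σ θ)) :=
      continuous_const.mul (hJσ σ hσ')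
    have c2 : Continuous fun θ => Φ' σ *
        ‖fderiv ℝ h (circleMap 0 σ θ) (circleMap 0 σ θ * Complex.I)‖ ^ 2 :=
      continuous_const.mul (hTσ σ hσ')
    rw [intervalIntegral.integral_add (c1.intervalIntegrable _ _) (c2.intervalIntegrable _ _),
      intervalIntegral.integral_const_mul (2 * Φ σ), intervalIntegral.integral_const_mul (Φ' σ)] at h1
    have h2 := mul_le_mul_of_nonneg_left (two_areaFn_le hr.le hC hσ') hΦ'
    linarith
  have hsub1 : Icc s₀ r₀ ⊆ Ioo r R := fun σ hσ => ⟨hs₀.1.trans_le hσ.1, hσ.2.trans_lt hr₀.2⟩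
  have hsub2 : Icc r₀ t₀ ⊆ Ioo r R := fun σ hσ => ⟨hr₀.1.trans_le hσ.1, hσ.2.trans_lt ht₀.2⟩
  have hsub3 : Icc r₀ t₀ ⊆ Icc r₀ R := Icc_subset_Icc_right ht₀.2.le
  have i1 : IntervalIntegrable g volume s₀ r₀ :=
    (hgc.mono hsub1).intervalIntegrable_of_Icc hs₀.2.le
  have i2 : IntervalIntegrable g volume r₀ t₀ :=
    (hgc.mono hsub2).intervalIntegrable_of_Icc ht₀.1.le
  rw [← intervalIntegral.integral_add_adjacent_intervals i1 i2]
  have hlamdiv : ContinuousOn (fun s => lam s / s) (Icc s₀ r₀) :=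
    (hlamc.mono (hsub1.trans Ioo_subset_Icc_self)).div continuousOn_id
      (fun σ hσ => (hr.trans (hsub1 hσ).1).ne')
  have b1 : 2 * Real.pi * rs ^ 2 * ∫ s in s₀..r₀, lam s / s ≤ ∫ σ in s₀..r₀, g σ := by
    rw [← intervalIntegral.integral_const_mul]
    exact intervalIntegral.integral_mono_on hs₀.2.le
      ((continuousOn_const.mul hlamdiv).intervalIntegrable_of_Icc hs₀.2.le) i1
      (fun σ hσ => claim1 σ (hsub1 hσ))
  have hac : ContinuousOn (areaFn h) (Icc r₀ t₀) := fun σ hσ =>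
    (hasDerivAt_areaFn hr.le hC (hsub2 hσ)).continuousAt.continuousWithinAt
  have hΦc : ContinuousOn Φ (Icc r₀ t₀) := fun σ hσ =>
    ((hΦd σ (hsub3 hσ)).continuousWithinAt).mono hsub3
  have hjc : ContinuousOn (fun σ => ∫ θ in (-Real.pi)..Real.pi, σ * jac h (circleMap 0 σ θ))
      (Icc r₀ t₀) :=
    (continuousOn_angular_integral (continuousOn_polar_comp hr.le (continuousOn_jac hC))).mono hsub2
  have i3 : IntervalIntegrable (fun σ => 2 * (Φ' σ * areaFn h σ +
      Φ σ * ∫ θ in (-Real.pi)..Real.pi, σ * jac h (circleMap 0 σ θ))) volume r₀ t₀ :=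
    (continuousOn_const.mul (((hΦ'c.mono hsub3).mul hac).add
      (hΦc.mul hjc))).intervalIntegrable_of_Icc ht₀.1.le
  have b2 : 2 * Φ t₀ * areaFn h t₀ ≤ ∫ σ in r₀..t₀, g σ := by
    have hftc := intervalIntegral.integral_eq_sub_of_hasDerivAt_of_le ht₀.1.le
      (f := fun σ => 2 * (Φ σ * areaFn h σ)) (continuousOn_const.mul (hΦc.mul hac))
      (fun σ hσ => ((((hΦd σ (hsub3 (Ioo_subset_Icc_self hσ))).hasDerivAt
        (Icc_mem_nhds hσ.1 (hσ.2.trans ht₀.2))).mul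
        (hasDerivAt_areaFn hr.le hC (hsub2 (Ioo_subset_Icc_self hσ)))).const_mul 2)) i3
    have hmono := intervalIntegral.integral_mono_on ht₀.1.le i3 i2
      (fun σ hσ => claim2 σ ⟨hσ.1, hσ.2.trans_lt ht₀.2⟩)
    rw [hftc, hΦr₀] at hmono
    linarith
  linarith

/-- Lower bound in the collapsing case. With a continuous, positive,
nondecreasing weight `lam` on `[r,R]`, a radius `r₀ ∈ (r,R)`, a C¹ solution `Φ ≥ 0` of
`s·λ·Φ' = λ² − Φ²` on `[r₀,R]` with `Φ(r₀) = 0`, and a C¹ solution `H` of `s·λ·H' = H·Φ`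
on `[r₀,R]` with `H(r₀) = r_*`, `H(R) = R_*`, every orientation-preserving C¹ diffeomorphism
`h` of `A(r,R)` onto `A(r_*,R_*)` preserving the order of boundary components satisfies
`∫_{A(r,R)} λ(|z|)·‖Dh(z)‖² dz ≥ 2π·R_*²·Φ(R) + 2π·r_*²·∫_r^{r₀} λ(s)/s ds`. -/
theorem stmt_2 (r R rs Rs r₀ : ℝ) (hr : 0 < r) (hrR : r < R) (hrs : 0 < rs) (hrsRs : rs < Rs)
    (hr₀ : r₀ ∈ Ioo r R)
    (lam Φ Φ' H H' : ℝ → ℝ)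
    (hlamc : ContinuousOn lam (Icc r R))
    (hlampos : ∀ s ∈ Icc r R, 0 < lam s)
    (hlammono : MonotoneOn lam (Icc r R))
    (hΦd : ∀ s ∈ Icc r₀ R, HasDerivWithinAt Φ (Φ' s) (Icc r₀ R) s)
    (hΦ'c : ContinuousOn Φ' (Icc r₀ R))
    (hΦode : ∀ s ∈ Icc r₀ R, s * lam s * Φ' s = lam s ^ 2 - Φ s ^ 2)
    (hΦr₀ : Φ r₀ = 0)
    (hΦnn : ∀ s ∈ Icc r₀ R, 0 ≤ Φ s)
    (hHd : ∀ s ∈ Icc r₀ R, HasDerivWithinAt H (H' s) (Icc r₀ R) s)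
    (hH'c : ContinuousOn H' (Icc r₀ R))
    (hHode : ∀ s ∈ Icc r₀ R, s * lam s * H' s = H s * Φ s)
    (hHr₀ : H r₀ = rs) (hHR : H R = Rs)
    (h : ℂ → ℂ)
    (hC : ContDiffOn ℝ 1 h {z : ℂ | r < ‖z‖ ∧ ‖z‖ < R})
    (hbij : BijOn h {z : ℂ | r < ‖z‖ ∧ ‖z‖ < R} {w : ℂ | rs < ‖w‖ ∧ ‖w‖ < Rs})
    (horient : ∀ z ∈ {z : ℂ | r < ‖z‖ ∧ ‖z‖ < R},
      0 < LinearMap.det ((fderiv ℝ h z).toLinearMap))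
    (hcont : ContinuousOn h (closure {z : ℂ | r < ‖z‖ ∧ ‖z‖ < R}))
    (hinner : ∀ z : ℂ, ‖z‖ = r → ‖h z‖ = rs)
    (houter : ∀ z : ℂ, ‖z‖ = R → ‖h z‖ = Rs) :
    (∫⁻ z in {z : ℂ | r < ‖z‖ ∧ ‖z‖ < R},
        ENNReal.ofReal
          (lam ‖z‖ * (‖fderiv ℝ h z 1‖ ^ 2 + ‖fderiv ℝ h z Complex.I‖ ^ 2))) ≥
      ENNReal.ofReal
        (2 * Real.pi * Rs ^ 2 * Φ R + 2 * Real.pi * rs ^ 2 * ∫ s in r..r₀, lam s / s) := by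
  have hΦc : ContinuousOn Φ (Icc r₀ R) := fun s hs => (hΦd s hs).continuousWithinAt
  have horient' : ∀ z ∈ annulus r R, 0 < jac h z := horient
  have harea : ∀ s ∈ Ioo r R, Real.pi * rs ^ 2 ≤ areaFn h s := fun s hs =>
    le_areaFn hr.le hrR hrs hrsRs hC hbij horient' hcont hinner houter hs
  have hlimR := tendsto_areaFn hr.le hrR hrs hrsRs hC hbij horient' hcont hinner houter
  have hΦlim : Tendsto Φ (𝓝[<] R) (𝓝 (Φ R)) := by
    have h1 : Tendsto Φ (𝓝[Icc r₀ R] R) (𝓝 (Φ R)) := hΦc R ⟨hr₀.2.le, le_rfl⟩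
    refine h1.mono_left ?_
    rw [← nhdsWithin_Ico_eq_nhdsLT hr₀.2]
    exact nhdsWithin_mono _ Ico_subset_Icc_self
  have hIlim : Tendsto (fun s₀ => ∫ s in s₀..r₀, lam s / s) (𝓝[>] r)
      (𝓝 (∫ s in r..r₀, lam s / s)) := by
    have hc : ContinuousOn (fun s => lam s / s) (Icc r r₀) :=
      (hlamc.mono (Icc_subset_Icc_right hr₀.2.le)).div continuousOn_id
        (fun σ hσ => (hr.trans_le hσ.1).ne')
    have hint : IntegrableOn (fun s => lam s / s) (uIcc r r₀) := by
      rw [uIcc_of_le hr₀.1.le]; exact hc.integrableOn_Icc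
    have h1 := intervalIntegral.continuousOn_primitive_interval_left hint
    have h2 : Tendsto (fun s₀ => ∫ s in s₀..r₀, lam s / s) (𝓝[uIcc r r₀] r)
      (𝓝 (∫ s in r..r₀, lam s / s)) := h1 r left_mem_uIcc
    refine h2.mono_left ?_
    rw [← nhdsWithin_Ioc_eq_nhdsGT hr₀.1, uIcc_of_le hr₀.1.le]
    exact nhdsWithin_mono _ Ioc_subset_Icc_self
  -- first let the outer radius tend to `R`
  have step1 : ∀ s₀ ∈ Ioo r r₀,
      ENNReal.ofReal (2 * Φ R * (Real.pi * Rs ^ 2) +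
        2 * Real.pi * rs ^ 2 * ∫ s in s₀..r₀, lam s / s) ≤
      ∫⁻ z in annulus r R, ENNReal.ofReal
        (lam ‖z‖ * (‖fderiv ℝ h z 1‖ ^ 2 + ‖fderiv ℝ h z Complex.I‖ ^ 2)) := by
    intro s₀ hs₀
    have hl := ENNReal.tendsto_ofReal (((hΦlim.const_mul 2).mul hlimR).add_const
      (2 * Real.pi * rs ^ 2 * ∫ s in s₀..r₀, lam s / s))
    refine le_of_tendsto hl ?_
    filter_upwards [Ioo_mem_nhdsLT hr₀.2] with t₀ ht₀
    exact energy_subannulus_bound hr hs₀ ht₀ hlamc hlampos hlammono hΦd hΦ'c hΦode hΦr₀ hΦnn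
      hC harea
  have hl := ENNReal.tendsto_ofReal ((hIlim.const_mul (2 * Real.pi * rs ^ 2)).const_add
    (2 * Φ R * (Real.pi * Rs ^ 2)))
  have e : 2 * Real.pi * Rs ^ 2 * Φ R = 2 * Φ R * (Real.pi * Rs ^ 2) := by ring
  rw [e]
  refine le_of_tendsto hl ?_
  filter_upwards [Ioo_mem_nhdsGT hr₀.1] with s₀ hs₀
  exact step1 s₀ hs₀
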